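/- Let h(z) = a_2 z² + a_3 z³ + … + a_n zⁿ with n ≥ 2 and a_2, …, a_n ∈ ℂ, h not identically zero, and suppose liminf_{i→∞} p_i > 0. If there exists k ≥ 3 such that p_i = 1 for all i ∈ {2, 3, …, k} and p_{k+1} < 1/2, then the set F_h is not connected. -/

import Mathlib

/-- `rr p n = r_n = p (⌊(n+1)/2⌋ + 1)`. -/
noncomputable def rr (p : ℕ → ℝ) (n : ℕ) : ℝ := p ((n+1)/2 + 1)

/-- `qF p z n = q_{F_n}(z)`. -/
noncomputable def qF (p : ℕ → ℝ) (z : ℂ) : ℕ → ℂ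
  | 0 => (z - (1 - (p 1 : ℂ))) / (p 1 : ℂ)
  | 1 => (1 / (p 2 : ℂ)) * (qF p z 0) ^ 2 - (1 / (p 2 : ℂ) - 1)
  | (n+2) => (1 / (rr p (n+2) : ℂ)) * qF p z (n+1) * qF p z n - (1 / (rr p (n+2) : ℂ) - 1)

/-- The sequence `φ_n` associated to a polynomial `h`: `φ_0(z) = z`, `φ_1(z) = h(z)`,
`φ_n(z) = (1/r_n) φ_{n-1}(z) φ_{n-2}(z) - (1/r_n - 1)` for `n ≥ 2`. -/
noncomputable def phiSeq (p : ℕ → ℝ) (h : Polynomial ℂ) : ℕ → ℂ → ℂ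
  | 0 => fun z => z
  | 1 => fun z => h.eval z
  | (n+2) => fun z =>
      (1 / (rr p (n+2) : ℂ)) * phiSeq p h (n+1) z * phiSeq p h n z - (1 / (rr p (n+2) : ℂ) - 1)

/-- The fibered filled Julia set `F_h = {z : (φ_n(z))ₙ is bounded}`. -/
def Fset (p : ℕ → ℝ) (h : Polynomial ℂ) : Set ℂ :=
  {z : ℂ | ∃ C : ℝ, ∀ n : ℕ, ‖phiSeq p h n z‖ ≤ C}

/-!
The origin is a critical point of every `φ_n` with `n ≥ 2`, and it escapes: the values at `0` of
`φ_{2k-1}` and `φ_{2k}` are both `1 - 1 / p_{k+1}`, of modulus greater than `1`, and two consecutive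
values outside the unit disc make the sequence diverge.

Suppose that `F_h` is connected and that `1 / r_n ≤ κ` for all `n`. It has a connected open
neighbourhood `X` on which `|φ_n| ≤ |φ_n(0)| / (2κ)` for all large `n`, since an escaping orbit
outgrows the orbits near `F_h`. For large `n` all zeros of `φ_n` lie in `X`, since the points
outside `X` escape uniformly. For two points `a`, `b` of the connected open set `X`, the function
`(z - b) / (z - a)` has a holomorphic logarithm off `X`, so `φ_n` has a holomorphic `d`-th root `g`
there, where `d` is its degree. With `T = |φ_n(0)| / (2κ)`, the image of `{|φ_n| > T}` under `g` is
open, and closed in the exterior of a disc, hence equal to it. A value `w` with `|w| > T` therefore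
has at least `d` preimages under `φ_n`, one for each `d`-th root of `w`, and none of them is
critical. The value `w = φ_n(0)` contradicts this.
-/

open Filter
open scoped Topology Polynomial

section Topology

lemma exists_isOpen_isPreconnected_subset {α : Type*} [TopologicalSpace α]
    [LocallyConnectedSpace α] {K O : Set α} (hK : IsPreconnected K) (hO : IsOpen O)
    (hKO : K ⊆ O) : ∃ X, IsOpen X ∧ IsPreconnected X ∧ K ⊆ X ∧ X ⊆ O := by
  obtain rfl | ⟨x, hx⟩ := K.eq_empty_or_nonempty
  · exact ⟨∅, isOpen_empty, isPreconnected_empty, subset_rfl, Set.empty_subset O⟩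
  · exact ⟨connectedComponentIn O x, hO.connectedComponentIn, isPreconnected_connectedComponentIn,
      hK.subset_connectedComponentIn hx hKO, connectedComponentIn_subset O x⟩

lemma isPreconnected_setOf_lt_norm {E : Type*} [NormedAddCommGroup E] [NormedSpace ℝ E]
    (hE : 1 < Module.rank ℝ E) {ρ : ℝ} (hρ : 0 ≤ ρ) : IsPreconnected {u : E | ρ < ‖u‖} := by
  have hpolar : {u : E | ρ < ‖u‖} =
      (fun q : ℝ × E => q.1 • q.2) '' (Set.Ioi ρ ×ˢ Metric.sphere (0 : E) 1) := by
    ext u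
    simp only [Set.mem_ofPred_eq, Set.mem_image, Set.mem_prod, Set.mem_Ioi,
      mem_sphere_zero_iff_norm, Prod.exists]
    constructor
    · intro hu
      have hu0 : ‖u‖ ≠ 0 := (hρ.trans_lt hu).ne'
      exact ⟨‖u‖, ‖u‖⁻¹ • u, ⟨hu, by simp [norm_smul, hu0]⟩, smul_inv_smul₀ hu0 u⟩
    · rintro ⟨t, v, ⟨ht, hv⟩, rfl⟩
      rw [norm_smul, hv, mul_one]
      exact ht.trans_le (le_abs_self t)
  rw [hpolar]
  exact (isPreconnected_Ioi.prod (isPreconnected_sphere hE 0 1)).image _ (by fun_prop)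

end Topology

section HolomorphicRoot

variable {X V : Set ℂ}

lemma exists_sub_eq_sub_mul_exp_of_norm_lt {x y : ℂ} (hV : ∀ z ∈ V, ‖x - y‖ < ‖z - x‖) :
    ∃ L : ℂ → ℂ, DifferentiableOn ℂ L V ∧ ∀ z ∈ V, z - y = (z - x) * Complex.exp (L z) := by
  have hne : ∀ z ∈ V, z - x ≠ 0 := fun z hz =>
    norm_pos_iff.1 ((norm_nonneg _).trans_lt (hV z hz))
  have hslit : ∀ z ∈ V, 1 + (x - y) / (z - x) ∈ Complex.slitPlane := fun z hz => by
    apply Complex.mem_slitPlane_of_norm_lt_one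
    rw [norm_div, div_lt_one (norm_pos_iff.2 (hne z hz))]
    exact hV z hz
  refine ⟨fun z => Complex.log (1 + (x - y) / (z - x)), fun z hz => ?_, fun z hz => ?_⟩
  · have hdiv : DifferentiableWithinAt ℂ (fun z => (x - y) / (z - x)) V z :=
      (differentiableWithinAt_const _).div (by fun_prop) (hne z hz)
    exact (hdiv.const_add 1).clog (hslit z hz)
  · rw [Complex.exp_log (Complex.slitPlane_ne_zero (hslit z hz)), mul_add,
      mul_div_cancel₀ _ (hne z hz)]
    ring

lemma exists_sub_eq_sub_mul_exp (hX : IsOpen X) (hXc : IsPreconnected X) (hXV : Disjoint X V)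
    {a b : ℂ} (ha : a ∈ X) (hb : b ∈ X) :
    ∃ L : ℂ → ℂ, DifferentiableOn ℂ L V ∧ ∀ z ∈ V, z - b = (z - a) * Complex.exp (L z) := by
  refine hXc.induction₂ (fun a b => ∃ L : ℂ → ℂ, DifferentiableOn ℂ L V ∧
    ∀ z ∈ V, z - b = (z - a) * Complex.exp (L z)) (fun x hx => ?_) ?_ ?_ ha hb
  · obtain ⟨ε, hε, hball⟩ := Metric.isOpen_iff.1 hX x hx
    filter_upwards [mem_nhdsWithin_of_mem_nhds (Metric.ball_mem_nhds x hε)] with y hy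
    refine exists_sub_eq_sub_mul_exp_of_norm_lt fun z hz => ?_
    have hfar : ε ≤ ‖z - x‖ := by
      by_contra! hlt
      exact hXV.notMem_of_mem_right hz (hball (mem_ball_iff_norm.2 hlt))
    exact (mem_ball_iff_norm'.1 hy).trans_le hfar
  · rintro x y z - - - ⟨L, hL, hxy⟩ ⟨M, hM, hyz⟩
    refine ⟨fun w => L w + M w, hL.add hM, fun w hw => ?_⟩
    rw [hyz w hw, hxy w hw, Complex.exp_add, mul_assoc]
  · rintro x y - - ⟨L, hL, hxy⟩
    refine ⟨fun w => -L w, hL.neg, fun w hw => ?_⟩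
    rw [hxy w hw, mul_assoc, ← Complex.exp_add, add_neg_cancel, Complex.exp_zero, mul_one]

lemma exists_prod_sub_eq_pow_mul_exp (hX : IsOpen X) (hXc : IsPreconnected X)
    (hXV : Disjoint X V) {a : ℂ} (ha : a ∈ X) (S : Multiset ℂ) (hS : ∀ b ∈ S, b ∈ X) :
    ∃ L : ℂ → ℂ, DifferentiableOn ℂ L V ∧
      ∀ z ∈ V, (S.map (z - ·)).prod = (z - a) ^ S.card * Complex.exp (L z) := by
  induction S using Multiset.induction_on with
  | empty => exact ⟨0, differentiableOn_const 0, by simp⟩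
  | cons b S ih =>
    obtain ⟨L, hL, hprod⟩ := ih fun c hc => hS c (Multiset.mem_cons_of_mem hc)
    obtain ⟨M, hM, hb⟩ :=
      exists_sub_eq_sub_mul_exp hX hXc hXV ha (hS b (Multiset.mem_cons_self b S))
    refine ⟨fun z => L z + M z, hL.add hM, fun z hz => ?_⟩
    rw [Multiset.map_cons, Multiset.prod_cons, Multiset.card_cons, hprod z hz, hb z hz,
      Complex.exp_add]
    ring

lemma exists_differentiableOn_pow_natDegree_eq_eval {P : ℂ[X]} (hP : 0 < P.natDegree)
    (hX : IsOpen X) (hXc : IsPreconnected X) (hXV : Disjoint X V)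
    (hroots : ∀ z, P.IsRoot z → z ∈ X) :
    ∃ g : ℂ → ℂ, DifferentiableOn ℂ g V ∧ ∀ z ∈ V, g z ^ P.natDegree = P.eval z := by
  have hsplits := IsAlgClosed.splits P
  obtain ⟨a, ha⟩ := Complex.exists_root (Polynomial.natDegree_pos_iff_degree_pos.1 hP)
  obtain ⟨L, hL, hprod⟩ := exists_prod_sub_eq_pow_mul_exp hX hXc hXV (hroots a ha) P.roots
    fun b hb => hroots b (Polynomial.isRoot_of_mem_roots hb)
  obtain ⟨c, hc⟩ := IsAlgClosed.exists_pow_nat_eq P.leadingCoeff hP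
  refine ⟨fun z => c * ((z - a) * Complex.exp (L z / P.natDegree)), ?_, fun z hz => ?_⟩
  · exact ((differentiableOn_id.sub_const a).mul (hL.div_const _).cexp).const_mul c
  · have hd : (P.natDegree : ℂ) ≠ 0 := Nat.cast_ne_zero.2 hP.ne'
    rw [mul_pow, mul_pow, hc, ← Complex.exp_nat_mul, mul_div_cancel₀ _ hd,
      hsplits.eval_eq_prod_roots, hprod z hz, ← hsplits.natDegree_eq_card_roots]

variable {P : ℂ[X]} {d : ℕ} {g : ℂ → ℂ}

lemma isOpen_image_of_pow_eq_eval (hP : 0 < P.natDegree) (hV : IsOpen V)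
    (hg : DifferentiableOn ℂ g V) (hgP : ∀ z ∈ V, g z ^ d = P.eval z) : IsOpen (g '' V) := by
  rw [isOpen_iff_mem_nhds]
  rintro _ ⟨v, hv, rfl⟩
  have hVv : V ∈ 𝓝 v := hV.mem_nhds hv
  rcases (hg.analyticAt hVv).eventually_constant_or_nhds_le_map_nhds with hconst | hopen
  · have hPv : ∀ᶠ z in 𝓝 v, P.eval z = (Polynomial.C (P.eval v)).eval z := by
      filter_upwards [hconst, hVv] with z hz hzV
      rw [Polynomial.eval_C, ← hgP z hzV, hz, hgP v hv]
    have hPC := Polynomial.eq_of_infinite_eval_eq _ _ (infinite_of_mem_nhds v hPv)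
    rw [hPC, Polynomial.natDegree_C] at hP
    exact absurd hP (lt_irrefl 0)
  · exact hopen (image_mem_map hVv)

lemma setOf_lt_norm_subset_image_of_pow_eq_eval (hP : 0 < P.natDegree) (hd : d ≠ 0) {ρ : ℝ}
    (hρ : 0 ≤ ρ) (hg : DifferentiableOn ℂ g {z | ρ ^ d < ‖P.eval z‖})
    (hgP : ∀ z ∈ {z | ρ ^ d < ‖P.eval z‖}, g z ^ d = P.eval z) :
    {u | ρ < ‖u‖} ⊆ g '' {z | ρ ^ d < ‖P.eval z‖} := by
  set V : Set ℂ := {z | ρ ^ d < ‖P.eval z‖}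
  have hVo : IsOpen V := isOpen_lt continuous_const P.continuous.norm
  have hlt : ∀ u : ℂ, ρ < ‖u‖ ↔ ρ ^ d < ‖u ^ d‖ := fun u => by
    rw [norm_pow, pow_lt_pow_iff_left₀ hρ (norm_nonneg u) hd]
  have hdeg := Polynomial.natDegree_pos_iff_degree_pos.1 hP
  have hconn : IsPreconnected {u : ℂ | ρ < ‖u‖} :=
    isPreconnected_setOf_lt_norm (by simp [Complex.rank_real_complex]) hρ
  refine hconn.subset_of_closure_inter_subset (isOpen_image_of_pow_eq_eval hP hVo hg hgP) ?_ ?_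
  · obtain ⟨z, hz⟩ := ((P.tendsto_norm_atTop hdeg
      tendsto_norm_cobounded_atTop).eventually_gt_atTop (ρ ^ d)).exists
    exact ⟨g z, (hlt _).2 (by rwa [hgP z hz]), z, hz, rfl⟩
  · rintro u ⟨hu, hρu⟩
    obtain ⟨F, hFV, hFu⟩ := mem_closure_iff_ultrafilter.1 hu
    set G := Ultrafilter.ofComapInfPrincipal hFV
    have hGV : V ∈ G := Ultrafilter.ofComapInfPrincipal_mem hFV
    have hgu : Tendsto g G (𝓝 u) := by
      rw [Tendsto, ← Ultrafilter.coe_map, Ultrafilter.ofComapInfPrincipal_eq_of_map hFV]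
      exact hFu
    have hPu : Tendsto P.eval G (𝓝 (u ^ d)) :=
      (hgu.pow d).congr' (by filter_upwards [hGV] with z hz using hgP z hz)
    obtain ⟨v, hv, hGv⟩ := (P.isProperMap_eval hdeg).ultrafilter_le_nhds_of_tendsto hPu
    have hvV : v ∈ V := by
      change ρ ^ d < ‖P.eval v‖
      rwa [hv, ← hlt]
    exact ⟨v, hvV, tendsto_nhds_unique
      (((hg.continuousOn.continuousAt (hVo.mem_nhds hvV)).tendsto).mono_left hGv) hgu⟩

end HolomorphicRoot

section CriticalPoint

lemma derivative_eval_ne_zero_of_natDegree_le_card_roots {R : Type*} [CommRing R] [IsDomain R]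
    [DecidableEq R] {Q : R[X]} (hQ : Q ≠ 0) (hcard : Q.natDegree ≤ Q.roots.toFinset.card) {z : R}
    (hz : Q.IsRoot z) : Q.derivative.eval z ≠ 0 := by
  intro hder
  have hnodup : Q.roots.Nodup := Multiset.toFinset_card_eq_card_iff_nodup.1 <|
    (Multiset.toFinset_card_le _).antisymm (Q.card_roots'.trans hcard)
  have hmult : 1 < Q.roots.count z := by
    rw [Polynomial.count_roots, Polynomial.one_lt_rootMultiplicity_iff_isRoot hQ]
    exact ⟨hz, hder⟩
  exact hmult.not_ge (Multiset.nodup_iff_count_le_one.1 hnodup z)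

lemma le_card_roots_sub_C {P : ℂ[X]} {d : ℕ} {g : ℂ → ℂ} {w : ℂ} (hd : 0 < d) (hw : w ≠ 0)
    (hP : P - Polynomial.C w ≠ 0) (hg : ∀ u, u ^ d = w → ∃ z, P.eval z = w ∧ g z = u) :
    d ≤ (P - Polynomial.C w).roots.toFinset.card := by
  have hprim := Complex.isPrimitiveRoot_exp d hd.ne'
  have hsub : (Polynomial.nthRoots d w).toFinset ⊆
      (P - Polynomial.C w).roots.toFinset.image g := fun u hu => by
    rw [Multiset.mem_toFinset, Polynomial.mem_nthRoots hd] at hu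
    obtain ⟨z, hz, rfl⟩ := hg u hu
    refine Finset.mem_image_of_mem g ?_
    simp [hP, hz]
  calc d = (Polynomial.nthRoots d w).toFinset.card := by
        rw [Multiset.toFinset_card_of_nodup (hprim.nthRoots_nodup hw), hprim.card_nthRoots,
          if_pos (IsAlgClosed.exists_pow_nat_eq w hd)]
    _ ≤ ((P - Polynomial.C w).roots.toFinset.image g).card := Finset.card_le_card hsub
    _ ≤ (P - Polynomial.C w).roots.toFinset.card := Finset.card_image_le

theorem derivative_eval_ne_zero_of_isPreconnected {P : ℂ[X]} (hP : 0 < P.natDegree) {X : Set ℂ}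
    (hX : IsOpen X) (hXc : IsPreconnected X) (hroots : ∀ z, P.IsRoot z → z ∈ X) {T : ℝ}
    (hXT : ∀ z ∈ X, ‖P.eval z‖ ≤ T) {z : ℂ} (hz : T < ‖P.eval z‖) :
    P.derivative.eval z ≠ 0 := by
  have hd : P.natDegree ≠ 0 := hP.ne'
  obtain ⟨a, ha⟩ := Complex.exists_root (Polynomial.natDegree_pos_iff_degree_pos.1 hP)
  have hT : 0 ≤ T := (norm_nonneg _).trans (hXT a (hroots a ha))
  obtain ⟨ρ, hρ, rfl⟩ : ∃ ρ : ℝ, 0 ≤ ρ ∧ ρ ^ P.natDegree = T :=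
    ⟨T ^ (P.natDegree⁻¹ : ℝ), by positivity, Real.rpow_inv_natCast_pow hT hd⟩
  set V : Set ℂ := {z | ρ ^ P.natDegree < ‖P.eval z‖}
  have hXV : Disjoint X V := Set.disjoint_left.2 fun x hx => (hXT x hx).not_gt
  obtain ⟨g, hg, hgP⟩ := exists_differentiableOn_pow_natDegree_eq_eval hP hX hXc hXV hroots
  have hsurj := setOf_lt_norm_subset_image_of_pow_eq_eval hP hd hρ hg hgP
  have hQ : P - Polynomial.C (P.eval z) ≠ 0 := fun h => by
    simpa [h] using hP.trans_eq (Polynomial.natDegree_sub_C (a := P.eval z)).symm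
  have hfiber : ∀ u, u ^ P.natDegree = P.eval z → ∃ v, P.eval v = P.eval z ∧ g v = u := by
    intro u hu
    have hu' : ρ < ‖u‖ := lt_of_pow_lt_pow_left₀ _ (norm_nonneg u) (by rwa [← norm_pow, hu])
    obtain ⟨v, hv, rfl⟩ := hsurj hu'
    exact ⟨v, by rw [← hgP v hv, hu], rfl⟩
  have hcard := le_card_roots_sub_C hP (norm_pos_iff.1 (hT.trans_lt hz)) hQ hfiber
  simpa using derivative_eval_ne_zero_of_natDegree_le_card_roots hQ
    (Polynomial.natDegree_sub_C.trans_le hcard) (z := z) (by simp)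

end CriticalPoint


section Recursion

/-- The recursion `x (n + 2) = c * x (n + 1) * x n - (c - 1)` of the `φ_n`, where `c = 1 / r_{n+2}`
may depend on `n` and only `1 ≤ c ≤ κ` is recorded. The ambient algebra is arbitrary so that the
notion covers both polynomials and their values at a point. -/
def IsFibRec {A : Type*} [Ring A] [Algebra ℝ A] (κ : ℝ) (x : ℕ → A) : Prop :=
  ∀ n, ∃ c ∈ Set.Icc 1 κ, x (n + 2) = c • (x (n + 1) * x n) - algebraMap ℝ A (c - 1)

namespace IsFibRec

section Algebra

variable {A B : Type*} [Ring A] [Algebra ℝ A] [Ring B] [Algebra ℝ B] {κ : ℝ} {x : ℕ → A}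

lemma one_le (hx : IsFibRec κ x) : 1 ≤ κ :=
  let ⟨_, hc, _⟩ := hx 0
  hc.1.trans hc.2

lemma map (f : A →ₐ[ℝ] B) (hx : IsFibRec κ x) : IsFibRec κ fun n => f (x n) := fun n => by
  obtain ⟨c, hc, hstep⟩ := hx n
  refine ⟨c, hc, ?_⟩
  simp only [hstep, map_sub, map_smul, map_mul, AlgHom.commutes]

lemma comp_add (hx : IsFibRec κ x) (m : ℕ) : IsFibRec κ fun n => x (m + n) :=
  fun n => hx (m + n)

end Algebra

section Norm

variable {A B : Type*} [NormedDivisionRing A] [NormedAlgebra ℝ A] [NormedDivisionRing B]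
  [NormedAlgebra ℝ B] {κ : ℝ} {x : ℕ → A} {y : ℕ → B}

lemma mul_norm_le (hx : IsFibRec κ x) (n : ℕ) (h : 1 ≤ ‖x (n + 1)‖ * ‖x n‖) :
    ‖x (n + 1)‖ * ‖x n‖ ≤ ‖x (n + 2)‖ := by
  obtain ⟨c, hc, hstep⟩ := hx n
  have hc0 : 0 ≤ c - 1 := sub_nonneg.2 hc.1
  calc ‖x (n + 1)‖ * ‖x n‖ ≤ c * (‖x (n + 1)‖ * ‖x n‖) - (c - 1) := by
        linarith [mul_nonneg hc0 (sub_nonneg.2 h)]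
    _ = ‖c • (x (n + 1) * x n)‖ - ‖algebraMap ℝ A (c - 1)‖ := by
        rw [norm_smul, norm_mul, norm_algebraMap', Real.norm_of_nonneg hc0,
          Real.norm_of_nonneg (zero_le_one.trans hc.1)]
    _ ≤ ‖x (n + 2)‖ := hstep ▸ norm_sub_norm_le _ _

lemma norm_le (hx : IsFibRec κ x) (n : ℕ) :
    ‖x (n + 2)‖ ≤ κ * (‖x (n + 1)‖ * ‖x n‖ + 1) := by
  obtain ⟨c, hc, hstep⟩ := hx n
  have hc0 : 0 ≤ c - 1 := sub_nonneg.2 hc.1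
  calc ‖x (n + 2)‖ ≤ ‖c • (x (n + 1) * x n)‖ + ‖algebraMap ℝ A (c - 1)‖ :=
        hstep ▸ norm_sub_le _ _
    _ = c * (‖x (n + 1)‖ * ‖x n‖) + (c - 1) := by
        rw [norm_smul, norm_mul, norm_algebraMap', Real.norm_of_nonneg hc0,
          Real.norm_of_nonneg (zero_le_one.trans hc.1)]
    _ ≤ c * (‖x (n + 1)‖ * ‖x n‖ + 1) := by linarith
    _ ≤ κ * (‖x (n + 1)‖ * ‖x n‖ + 1) := by gcongr; exact hc.2

lemma one_lt_norm (hx : IsFibRec κ x) (h0 : 1 < ‖x 0‖) (h1 : 1 < ‖x 1‖) (n : ℕ) :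
    1 < ‖x n‖ := by
  induction n using Nat.twoStepInduction with
  | zero => exact h0
  | one => exact h1
  | more n ihn ihn' =>
    have hprod : 1 < ‖x (n + 1)‖ * ‖x n‖ := one_lt_mul_of_lt_of_le ihn' ihn.le
    exact hprod.trans_le (hx.mul_norm_le n hprod.le)

lemma tendsto_norm_atTop (hx : IsFibRec κ x) (h0 : 1 < ‖x 0‖) (h1 : 1 < ‖x 1‖) :
    Tendsto (fun n => ‖x n‖) atTop atTop := by
  have hone := hx.one_lt_norm h0 h1
  have hprod : ∀ n, ‖x (n + 1)‖ * ‖x n‖ ≤ ‖x (n + 2)‖ := fun n =>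
    hx.mul_norm_le n (one_lt_mul_of_lt_of_le (hone _) (hone _).le).le
  have hmono : Monotone fun n => ‖x (n + 1)‖ := monotone_nat_of_le_succ fun n =>
    (le_mul_of_one_le_right (norm_nonneg _) (hone n).le).trans (hprod n)
  have hgeom : ∀ n, ‖x 1‖ * ‖x (n + 2)‖ ≤ ‖x (n + 3)‖ := fun n => calc
    ‖x 1‖ * ‖x (n + 2)‖ ≤ ‖x (n + 1)‖ * ‖x (n + 2)‖ := by
      gcongr
      exact hmono n.zero_le
    _ = ‖x (n + 2)‖ * ‖x (n + 1)‖ := mul_comm _ _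
    _ ≤ ‖x (n + 3)‖ := hprod (n + 1)
  exact (tendsto_add_atTop_iff_nat 2).1
    (tendsto_atTop_of_geom_le (zero_lt_one.trans (hone 2)) h1 hgeom)

-- A large value preceded by a small one forces the value two steps earlier to be large. The one
-- before that is then tiny, as their product is at most `1`, so its own predecessor is even larger.
lemma norm_add_four_le (hx : IsFibRec κ x) {n : ℕ} (h3 : ‖x (n + 3)‖ ≤ 1)
    (h4 : κ * (κ * (2 * κ + 1) + 1) ≤ ‖x (n + 4)‖) : ‖x (n + 4)‖ ≤ ‖x n‖ := by
  have hκ := hx.one_le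
  have hup4 : ‖x (n + 4)‖ ≤ κ * (‖x (n + 2)‖ + 1) := by
    refine (hx.norm_le (n + 2)).trans ?_
    gcongr
    exact mul_le_of_le_one_left (norm_nonneg _) h3
  have hlarge : κ * (2 * κ + 1) ≤ ‖x (n + 2)‖ := by
    have := le_of_mul_le_mul_left (h4.trans hup4) (by linarith)
    linarith
  have hprod : ‖x (n + 2)‖ * ‖x (n + 1)‖ ≤ 1 := by
    by_contra! hlt
    exact (hlt.trans_le (hx.mul_norm_le (n + 1) hlt.le)).not_ge h3
  have hmid : 2 * κ ≤ ‖x (n + 1)‖ * ‖x n‖ := by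
    have := le_of_mul_le_mul_left (hlarge.trans (hx.norm_le n)) (by linarith)
    linarith
  have hone : 1 ≤ ‖x (n + 2)‖ := by nlinarith
  calc ‖x (n + 4)‖ ≤ κ * (‖x (n + 2)‖ + 1) := hup4
    _ ≤ ‖x (n + 2)‖ * (2 * κ) := by nlinarith
    _ ≤ ‖x (n + 2)‖ * (‖x (n + 1)‖ * ‖x n‖) := by gcongr
    _ = (‖x (n + 2)‖ * ‖x (n + 1)‖) * ‖x n‖ := (mul_assoc _ _ _).symm
    _ ≤ ‖x n‖ := mul_le_of_le_one_left (norm_nonneg _) hprod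

lemma norm_le_max (hx : IsFibRec κ x) (hsmall : ∀ n, ‖x n‖ ≤ 1 ∨ ‖x (n + 1)‖ ≤ 1) {b : ℝ}
    (hb : ∀ n < 4, ‖x n‖ ≤ b) (n : ℕ) : ‖x n‖ ≤ max b (κ * (κ * (2 * κ + 1) + 1)) := by
  induction n using Nat.strong_induction_on with
  | _ n ih =>
    obtain hn | hn := lt_or_ge n 4
    · exact (hb n hn).trans (le_max_left _ _)
    obtain ⟨m, rfl⟩ := Nat.exists_eq_add_of_le' hn
    obtain hle | hlt := le_or_gt ‖x (m + 4)‖ (κ * (κ * (2 * κ + 1) + 1))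
    · exact hle.trans (le_max_right _ _)
    have hκ := hx.one_le
    have hone : 1 < ‖x (m + 4)‖ := hlt.trans_le' (one_le_mul_of_one_le_of_one_le hκ (by nlinarith))
    have h3 : ‖x (m + 3)‖ ≤ 1 := (hsmall (m + 3)).resolve_right hone.not_ge
    exact (hx.norm_add_four_le h3 hlt.le).trans (ih m (by omega))

lemma two_mul_max_norm_lt (hx : IsFibRec κ x) (hy : IsFibRec κ y)
    (h0 : 2 * κ * max 1 ‖x 0‖ < ‖y 0‖) (h1 : 2 * κ * max 1 ‖x 1‖ < ‖y 1‖) (n : ℕ) :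
    2 * κ * max 1 ‖x n‖ < ‖y n‖ := by
  have hκ := hx.one_le
  induction n using Nat.twoStepInduction with
  | zero => exact h0
  | one => exact h1
  | more n ih ih' =>
    set a := max 1 ‖x n‖
    set b := max 1 ‖x (n + 1)‖
    have ha : 1 ≤ a := le_max_left _ _
    have hb : 1 ≤ b := le_max_left _ _
    have hab : 1 ≤ b * a := one_le_mul_of_one_le_of_one_le hb ha
    have hxn : max 1 ‖x (n + 2)‖ ≤ 2 * κ * (b * a) := by
      refine max_le (by nlinarith) ((hx.norm_le n).trans ?_)
      have hprod : ‖x (n + 1)‖ * ‖x n‖ ≤ b * a := by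
        gcongr <;> exact le_max_right _ _
      nlinarith
    have hyn : 2 * κ * b * (2 * κ * a) < ‖y (n + 1)‖ * ‖y n‖ := by gcongr
    have hone : 1 ≤ ‖y (n + 1)‖ * ‖y n‖ := by
      refine le_trans ?_ hyn.le
      apply one_le_mul_of_one_le_of_one_le <;> nlinarith
    calc 2 * κ * max 1 ‖x (n + 2)‖ ≤ 2 * κ * (2 * κ * (b * a)) := by gcongr
      _ = 2 * κ * b * (2 * κ * a) := by ring
      _ < ‖y (n + 1)‖ * ‖y n‖ := hyn
      _ ≤ ‖y (n + 2)‖ := hy.mul_norm_le n hone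

end Norm

end IsFibRec

end Recursion


section FilledJulia

/-- The filled Julia set of a sequence of polynomials: the points along which the sequence is
bounded. For the polynomials `φ_n` it is the set `F_h`. -/
def filledJulia (Φ : ℕ → ℂ[X]) : Set ℂ :=
  {z | ∃ b : ℝ, ∀ n, ‖(Φ n).eval z‖ ≤ b}

/-- The points at which the two consecutive values of index `n` and `n + 1` lie outside the closed
unit disc. For sequences satisfying `IsFibRec` this makes the whole sequence of values diverge. -/
def escapeSet (Φ : ℕ → ℂ[X]) (n : ℕ) : Set ℂ :=
  {z | 1 < ‖(Φ n).eval z‖ ∧ 1 < ‖(Φ (n + 1)).eval z‖}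

variable {κ : ℝ} {Φ : ℕ → ℂ[X]} {z : ℂ} {n : ℕ}

lemma isOpen_escapeSet (Φ : ℕ → ℂ[X]) (n : ℕ) : IsOpen (escapeSet Φ n) :=
  (isOpen_lt continuous_const (Φ n).continuous.norm).inter
    (isOpen_lt continuous_const (Φ (n + 1)).continuous.norm)

lemma isCompact_compl_escapeSet (h0 : 0 < (Φ n).natDegree) (h1 : 0 < (Φ (n + 1)).natDegree) :
    IsCompact (escapeSet Φ n)ᶜ := by
  refine Metric.isCompact_of_isClosed_isBounded (isOpen_escapeSet Φ n).isClosed_compl ?_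
  have hlarge : ∀ P : ℂ[X], 0 < P.natDegree → ∀ᶠ z in Bornology.cobounded ℂ, 1 < ‖P.eval z‖ :=
    fun P hP => (P.tendsto_norm_atTop (Polynomial.natDegree_pos_iff_degree_pos.1 hP)
      tendsto_norm_cobounded_atTop).eventually_gt_atTop 1
  rw [Bornology.isBounded_def, compl_compl]
  exact (hlarge _ h0).and (hlarge _ h1)

namespace IsFibRec

lemma eval (hΦ : IsFibRec κ Φ) (z : ℂ) : IsFibRec κ fun n => (Φ n).eval z :=
  hΦ.map ((Polynomial.aeval z).restrictScalars ℝ)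

lemma natDegree_pos (hΦ : IsFibRec κ Φ) (h0 : 0 < (Φ 0).natDegree) (h1 : 0 < (Φ 1).natDegree)
    (n : ℕ) : 0 < (Φ n).natDegree := by
  induction n using Nat.twoStepInduction with
  | zero => exact h0
  | one => exact h1
  | more n ih ih' =>
    obtain ⟨c, hc, hstep⟩ := hΦ n
    have hc0 : c ≠ 0 := (zero_lt_one.trans_le hc.1).ne'
    rw [hstep, Polynomial.algebraMap_apply, Polynomial.natDegree_sub_C,
      Polynomial.natDegree_smul _ hc0, Polynomial.natDegree_mul
        (Polynomial.ne_zero_of_natDegree_gt ih') (Polynomial.ne_zero_of_natDegree_gt ih)]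
    omega

lemma derivative_eval_eq_zero (hΦ : IsFibRec κ Φ) (h0 : (Φ 0).derivative.eval z = 0)
    (h1 : (Φ 1).derivative.eval z = 0) (n : ℕ) : (Φ n).derivative.eval z = 0 := by
  induction n using Nat.twoStepInduction with
  | zero => exact h0
  | one => exact h1
  | more n ih ih' =>
    obtain ⟨c, -, hstep⟩ := hΦ n
    simp [hstep, ih, ih']

lemma monotone_escapeSet (hΦ : IsFibRec κ Φ) : Monotone (escapeSet Φ) :=
  monotone_nat_of_le_succ fun n z hz => ⟨hz.2, ((hΦ.eval z).comp_add n).one_lt_norm hz.1 hz.2 2⟩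

lemma tendsto_norm_eval_atTop (hΦ : IsFibRec κ Φ) (hz : z ∈ escapeSet Φ n) :
    Tendsto (fun n => ‖(Φ n).eval z‖) atTop atTop := by
  have htail := ((hΦ.eval z).comp_add n).tendsto_norm_atTop hz.1 hz.2
  simp only [add_comm n] at htail
  exact (tendsto_add_atTop_iff_nat n).1 htail

lemma disjoint_filledJulia_escapeSet (hΦ : IsFibRec κ Φ) (n : ℕ) :
    Disjoint (filledJulia Φ) (escapeSet Φ n) := by
  refine Set.disjoint_left.2 fun z ⟨b, hb⟩ hz => ?_
  obtain ⟨m, hm⟩ := ((hΦ.tendsto_norm_eval_atTop hz).eventually_gt_atTop b).exists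
  exact hm.not_ge (hb m)

lemma norm_eval_le_max (hΦ : IsFibRec κ Φ) (hz : ∀ n, z ∉ escapeSet Φ n) {b : ℝ}
    (hb : ∀ n < 4, ‖(Φ n).eval z‖ ≤ b) (n : ℕ) :
    ‖(Φ n).eval z‖ ≤ max b (κ * (κ * (2 * κ + 1) + 1)) :=
  (hΦ.eval z).norm_le_max (fun n => by
    simpa only [escapeSet, Set.mem_ofPred_eq, not_and_or, not_lt] using hz n) hb n

lemma compl_filledJulia (hΦ : IsFibRec κ Φ) : (filledJulia Φ)ᶜ = ⋃ n, escapeSet Φ n := by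
  refine Set.Subset.antisymm (fun z hz => ?_) (Set.iUnion_subset fun n =>
    Set.subset_compl_iff_disjoint_left.2 (hΦ.disjoint_filledJulia_escapeSet n))
  by_contra hne
  rw [Set.mem_iUnion, not_exists] at hne
  obtain ⟨b, hb⟩ := ((Set.finite_Iio 4).image fun n => ‖(Φ n).eval z‖).bddAbove
  exact hz ⟨_, hΦ.norm_eval_le_max hne fun n hn => hb (Set.mem_image_of_mem _ hn)⟩

lemma exists_norm_eval_le (hΦ : IsFibRec κ Φ) (h0 : 0 < (Φ 0).natDegree)
    (h1 : 0 < (Φ 1).natDegree) : ∃ R, ∀ z ∈ filledJulia Φ, ∀ n, ‖(Φ n).eval z‖ ≤ R := by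
  have hK : ∀ n, filledJulia Φ ⊆ (escapeSet Φ n)ᶜ := fun n =>
    Set.subset_compl_iff_disjoint_right.2 (hΦ.disjoint_filledJulia_escapeSet n)
  choose b hb using fun n => (isCompact_compl_escapeSet h0 h1).exists_bound_of_continuousOn
    (Φ n).continuous.continuousOn
  obtain ⟨B, hB⟩ := ((Set.finite_Iio 4).image b).bddAbove
  exact ⟨_, fun z hz => hΦ.norm_eval_le_max (fun n => hK n hz) fun n hn =>
    (hb n z (hK 0 hz)).trans (hB (Set.mem_image_of_mem b hn))⟩

lemma exists_compl_subset_escapeSet (hΦ : IsFibRec κ Φ) (h0 : 0 < (Φ 0).natDegree)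
    (h1 : 0 < (Φ 1).natDegree) {X : Set ℂ} (hX : IsOpen X) (hKX : filledJulia Φ ⊆ X) :
    ∃ m, Xᶜ ⊆ escapeSet Φ m := by
  have hcompact : IsCompact ((escapeSet Φ 0)ᶜ ∩ Xᶜ) :=
    (isCompact_compl_escapeSet h0 h1).inter_right hX.isClosed_compl
  obtain ⟨m, hm⟩ := hcompact.elim_directed_cover (escapeSet Φ) (isOpen_escapeSet Φ)
    (hΦ.compl_filledJulia ▸ Set.inter_subset_right.trans (Set.compl_subset_compl.2 hKX))
    hΦ.monotone_escapeSet.directed_le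
  refine ⟨m, fun z hz => ?_⟩
  by_cases hz0 : z ∈ escapeSet Φ 0
  · exact hΦ.monotone_escapeSet m.zero_le hz0
  · exact hm ⟨hz0, hz⟩

lemma eventually_two_mul_norm_eval_le (hΦ : IsFibRec κ Φ) (h0 : 0 < (Φ 0).natDegree)
    (h1 : 0 < (Φ 1).natDegree) (hz : z ∉ filledJulia Φ) :
    ∃ O, IsOpen O ∧ filledJulia Φ ⊆ O ∧
      ∀ᶠ n in atTop, ∀ w ∈ O, 2 * κ * ‖(Φ n).eval w‖ ≤ ‖(Φ n).eval z‖ := by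
  have hκ := hΦ.one_le
  obtain ⟨R, hR⟩ := hΦ.exists_norm_eval_le h0 h1
  obtain ⟨m, hm⟩ := Set.mem_iUnion.1 (hΦ.compl_filledJulia ▸ Set.mem_compl hz)
  obtain ⟨N, hN⟩ := eventually_atTop.1 <|
    (hΦ.tendsto_norm_eval_atTop hm).eventually_gt_atTop (2 * κ * max 1 (R + 1))
  refine ⟨{w | ‖(Φ N).eval w‖ < R + 1} ∩ {w | ‖(Φ (N + 1)).eval w‖ < R + 1},
    (isOpen_lt (Φ N).continuous.norm continuous_const).inter
      (isOpen_lt (Φ (N + 1)).continuous.norm continuous_const),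
    fun w hw => ⟨(hR w hw N).trans_lt (lt_add_one R), (hR w hw (N + 1)).trans_lt (lt_add_one R)⟩,
    eventually_atTop.2 ⟨N, fun n hn w hw => ?_⟩⟩
  have hstart : ∀ i, N ≤ i → ‖(Φ i).eval w‖ < R + 1 →
      2 * κ * max 1 ‖(Φ i).eval w‖ < ‖(Φ i).eval z‖ := fun i hi hwi => by
    refine (mul_le_mul_of_nonneg_left ?_ (by linarith)).trans_lt (hN i hi)
    exact max_le_max_left 1 hwi.le
  obtain ⟨j, rfl⟩ := Nat.exists_eq_add_of_le hn
  have hlt := ((hΦ.eval w).comp_add N).two_mul_max_norm_lt ((hΦ.eval z).comp_add N)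
    (hstart N le_rfl hw.1) (hstart (N + 1) N.le_succ hw.2) j
  exact (mul_le_mul_of_nonneg_left (le_max_right _ _) (by linarith)).trans hlt.le

theorem eventually_derivative_eval_ne_zero (hΦ : IsFibRec κ Φ) (h0 : 0 < (Φ 0).natDegree)
    (h1 : 0 < (Φ 1).natDegree) (hconn : IsPreconnected (filledJulia Φ))
    (hz : z ∉ filledJulia Φ) : ∀ᶠ n in atTop, (Φ n).derivative.eval z ≠ 0 := by
  have hκ := hΦ.one_le
  obtain ⟨O, hO, hKO, hsmall⟩ := hΦ.eventually_two_mul_norm_eval_le h0 h1 hz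
  obtain ⟨X, hX, hXc, hKX, hXO⟩ := exists_isOpen_isPreconnected_subset hconn hO hKO
  obtain ⟨m, hm⟩ := hΦ.exists_compl_subset_escapeSet h0 h1 hX hKX
  obtain ⟨i, hi⟩ := Set.mem_iUnion.1 (hΦ.compl_filledJulia ▸ Set.mem_compl hz)
  filter_upwards [hsmall, eventually_ge_atTop m, eventually_ge_atTop i] with n hn hmn hin
  have hroots : ∀ w, (Φ n).IsRoot w → w ∈ X := fun w hw => by
    by_contra hwX
    have hlt := (hΦ.monotone_escapeSet hmn (hm hwX)).1
    rw [hw.eq_zero, norm_zero] at hlt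
    exact hlt.not_ge zero_le_one
  have hz1 : 1 < ‖(Φ n).eval z‖ := (hΦ.monotone_escapeSet hin hi).1
  refine derivative_eval_ne_zero_of_isPreconnected (hΦ.natDegree_pos h0 h1 n) hX hXc hroots
    (T := ‖(Φ n).eval z‖ / (2 * κ)) (fun w hw => ?_) (div_lt_self ?_ ?_)
  · rw [le_div_iff₀' (by positivity)]
    exact hn w (hXO hw)
  · linarith
  · linarith

end IsFibRec

end FilledJulia

section Fset

lemma bddAbove_range_inv_of_liminf_pos {u : ℕ → ℝ} (hu : ∀ n, 0 ≤ u n)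
    (hlim : 0 < liminf u atTop) : BddAbove (Set.range fun n => (u n)⁻¹) := by
  obtain ⟨δ, hδ, hδu⟩ := exists_between hlim
  have hbdd : IsBoundedUnder (· ≥ ·) atTop u := isBoundedUnder_of ⟨0, hu⟩
  refine IsBoundedUnder.bddAbove_range ⟨δ⁻¹, ?_⟩
  rw [eventually_map]
  filter_upwards [eventually_lt_of_lt_liminf hδu hbdd] with n hn
  exact inv_anti₀ hδ hn.le

/-- The `φ_n` as polynomials in `z`. -/
noncomputable def phiPoly (p : ℕ → ℝ) (h : ℂ[X]) : ℕ → ℂ[X]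
  | 0 => Polynomial.X
  | 1 => h
  | n + 2 => (1 / rr p (n + 2)) • (phiPoly p h (n + 1) * phiPoly p h n) -
      algebraMap ℝ ℂ[X] (1 / rr p (n + 2) - 1)

variable {p : ℕ → ℝ} {h : ℂ[X]}

lemma eval_phiPoly (p : ℕ → ℝ) (h : ℂ[X]) (n : ℕ) (z : ℂ) :
    (phiPoly p h n).eval z = phiSeq p h n z := by
  induction n using Nat.twoStepInduction with
  | zero => exact Polynomial.eval_X
  | one => rfl
  | more n ih ih' =>
    simp [phiPoly, phiSeq, ih, ih', Polynomial.algebraMap_apply, mul_assoc]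

lemma filledJulia_phiPoly (p : ℕ → ℝ) (h : ℂ[X]) : filledJulia (phiPoly p h) = Fset p h := by
  simp only [filledJulia, Fset, eval_phiPoly]

lemma exists_isFibRec_phiPoly (hp : ∀ i, 2 ≤ i → 0 < p i ∧ p i ≤ 1)
    (hlim : 0 < liminf p atTop) (h : ℂ[X]) : ∃ κ, IsFibRec κ (phiPoly p h) := by
  obtain ⟨κ, hκ⟩ := bddAbove_range_inv_of_liminf_pos (u := fun n => p (n + 2))
    (fun n => (hp _ (by omega)).1.le) (by rwa [liminf_nat_add])
  refine ⟨κ, fun n => ⟨1 / rr p (n + 2), ⟨?_, ?_⟩, rfl⟩⟩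
  · obtain ⟨hpos, hle⟩ := hp ((n + 2 + 1) / 2 + 1) (by omega)
    exact one_le_one_div hpos hle
  · have hidx : (n + 2 + 1) / 2 + 1 = (n + 1) / 2 + 2 := by omega
    rw [rr, hidx, one_div]
    exact hκ (Set.mem_range_self _)

lemma phiSeq_eval_zero {k : ℕ} (h0 : h.coeff 0 = 0) (hone : ∀ i, 2 ≤ i → i ≤ k → p i = 1) {n : ℕ}
    (hn : n + 2 ≤ 2 * k) : phiSeq p h n 0 = 0 := by
  induction n using Nat.twoStepInduction with
  | zero => rfl
  | one => exact (Polynomial.coeff_zero_eq_eval_zero h).symm.trans h0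
  | more n ih _ =>
    have hr : rr p (n + 2) = 1 := hone _ (by omega) (by omega)
    simp [phiSeq, ih (by omega), hr]

lemma one_lt_norm_phiSeq {n : ℕ} {z : ℂ} (hn : phiSeq p h n z = 0) (hr0 : 0 < rr p (n + 2))
    (hr : rr p (n + 2) < 1 / 2) : 1 < ‖phiSeq p h (n + 2) z‖ := by
  have hval : phiSeq p h (n + 2) z = ((1 - 1 / rr p (n + 2) : ℝ) : ℂ) := by
    simp [phiSeq, hn]
  have hinv : 2 < 1 / rr p (n + 2) := (lt_one_div two_pos hr0).2 hr
  rw [hval, Complex.norm_real, Real.norm_eq_abs, lt_abs]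
  right
  linarith

lemma derivative_phiPoly_eval_zero {κ : ℝ} (hΦ : IsFibRec κ (phiPoly p h)) (h0 : h.coeff 0 = 0)
    (hp2 : p 2 = 1) {n : ℕ} (hn : 2 ≤ n) : (phiPoly p h n).derivative.eval 0 = 0 := by
  have hh : h.eval 0 = 0 := (Polynomial.coeff_zero_eq_eval_zero h).symm.trans h0
  have hr : rr p 2 = 1 := hp2
  obtain ⟨j, rfl⟩ := Nat.exists_eq_add_of_le hn
  exact (hΦ.comp_add 2).derivative_eval_eq_zero (by simp [phiPoly, hh, hr])
    (by simp [phiPoly, hh, hr]) j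

lemma zero_notMem_Fset {κ : ℝ} (hΦ : IsFibRec κ (phiPoly p h)) (h0 : h.coeff 0 = 0) {k : ℕ}
    (hk : 2 ≤ k) (hone : ∀ i, 2 ≤ i → i ≤ k → p i = 1) (hpos : 0 < p (k + 1))
    (hlt : p (k + 1) < 1 / 2) : 0 ∉ Fset p h := by
  obtain ⟨j, rfl⟩ := Nat.exists_eq_add_of_le' hk
  have hescape : ∀ n, n = 2 * j + 1 ∨ n = 2 * j + 2 → 1 < ‖phiSeq p h (n + 2) 0‖ := fun n hn => by
    have hr : rr p (n + 2) = p (j + 2 + 1) := congrArg p (by omega)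
    exact one_lt_norm_phiSeq (phiSeq_eval_zero h0 hone (by omega)) (hr ▸ hpos) (hr ▸ hlt)
  have hmem : 0 ∈ escapeSet (phiPoly p h) (2 * j + 3) := by
    simp only [escapeSet, eval_phiPoly]
    exact ⟨hescape _ (.inl rfl), hescape _ (.inr rfl)⟩
  rw [← filledJulia_phiPoly]
  exact (hΦ.disjoint_filledJulia_escapeSet _).notMem_of_mem_right hmem

end Fset

-- Even for `a_1 ≠ 0`, the polynomial `φ_2 = z h(z)` has a double zero at `0` because `r_2 = 1`, so
-- `0` is a critical point of every `φ_n` with `n ≥ 2`.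
theorem stmt18_general {p : ℕ → ℝ} (hp : ∀ i, 2 ≤ i → 0 < p i ∧ p i ≤ 1) {h : Polynomial ℂ}
    (hne : h ≠ 0) (h0 : h.coeff 0 = 0) (hlim : 0 < liminf p atTop) {k : ℕ} (hk : 2 ≤ k)
    (hone : ∀ i, 2 ≤ i → i ≤ k → p i = 1) (hk1 : p (k + 1) < 1 / 2) :
    ¬ IsPreconnected (Fset p h) := by
  intro hconn
  obtain ⟨κ, hΦ⟩ := exists_isFibRec_phiPoly hp hlim h
  have hdeg : 0 < h.natDegree := by
    refine Nat.pos_of_ne_zero fun hd => hne ?_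
    rw [Polynomial.eq_C_of_natDegree_eq_zero hd, h0, Polynomial.C_0]
  have hzero := zero_notMem_Fset hΦ h0 hk hone (hp (k + 1) (by omega)).1 hk1
  rw [← filledJulia_phiPoly] at hconn hzero
  have hnoncrit := hΦ.eventually_derivative_eval_ne_zero (by simp [phiPoly]) hdeg hconn hzero
  obtain ⟨n, hn, hn2⟩ := (hnoncrit.and (eventually_ge_atTop 2)).exists
  exact hn (derivative_phiPoly_eval_zero hΦ h0 (hone 2 le_rfl hk) hn2)

/-- Let `h(z) = a₂z² + ⋯ + aₙzⁿ` (a nonzero polynomial with zero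
constant and linear coefficients) and suppose `liminf p i > 0`.  If there is `k ≥ 3`
with `p i = 1` for all `2 ≤ i ≤ k` and `p (k+1) < 1/2`, then `F_h` is not connected. -/
theorem stmt18 (p : ℕ → ℝ) (hp : ∀ i, 1 ≤ i → 0 < p i ∧ p i ≤ 1)
    (h : Polynomial ℂ) (hne : h ≠ 0) (hc0 : h.coeff 0 = 0) (hc1 : h.coeff 1 = 0)
    (hlim : 0 < Filter.liminf p Filter.atTop)
    (k : ℕ) (hk : 3 ≤ k) (hone : ∀ i, 2 ≤ i → i ≤ k → p i = 1)
    (hk1 : p (k+1) < 1/2) :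
    ¬ IsConnected (Fset p h) :=
  fun hconn => stmt18_general (fun i hi => hp i (by omega)) hne hc0 hlim (by omega) hone hk1
    hconn.isPreconnected
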